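/- Let R be a regular domain with a generalized regular system of parameters x = x_1,…,x_p. Let I ⊆ R be an ideal and let g_1,…,g_s be a generating set of I. Then Γ_x(I) = conv⟨Γ_x(g_1) ∪ ⋯ ∪ Γ_x(g_s)⟩. In particular, the Newton polyhedron of I can be computed from any generating set and does not depend on the choice of generators. -/

import Mathlib

open Ideal Set Pointwise

noncomputable section

namespace NND

variable {R : Type*} [CommRing R] {p : ℕ}

/-- The monomial `x^a = x 0 ^ a 0 * ⋯` in the elements `x`. -/
def mono (x : Fin p → R) (a : Fin p → ℕ) : R := ∏ i, x i ^ a i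

/-- A (commutative) ring is regular local if it is Noetherian local and its maximal ideal
can be generated by `dim R` elements. -/
def IsRegularLocal (A : Type*) [CommRing A] : Prop :=
  IsNoetherianRing A ∧ ∃ h : IsLocalRing A, ∃ s : Finset A,
    Ideal.span (s : Set A) = @IsLocalRing.maximalIdeal A _ h ∧
    (s.card : WithBot (WithTop ℕ)) = ringKrullDim A

/-- A regular domain: an integral domain whose localization at every prime is regular local. -/
def IsRegularDomain (A : Type*) [CommRing A] : Prop :=
  IsDomain A ∧ ∀ (P : Ideal A) (hP : P.IsPrime), IsRegularLocal (@Localization.AtPrime A _ P hP)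

/-- `x` is a regular sequence. -/
def IsRegSeq (x : Fin p → R) : Prop :=
  Ideal.span (Set.range x) ≠ ⊤ ∧
  ∀ i : Fin p, ∀ r : R, r * x i ∈ Ideal.span (x '' {j | j < i}) →
    r ∈ Ideal.span (x '' {j | j < i})

/-- A generalized regular system of parameters: a permutable regular sequence all of whose
subquotients are regular domains. -/
def IsGRSOP (x : Fin p → R) : Prop :=
  (∀ σ : Equiv.Perm (Fin p), IsRegSeq (x ∘ σ)) ∧
  ∀ S : Set (Fin p), IsRegularDomain (R ⧸ Ideal.span (x '' S))

/-- `A` is the exponent set of a monomial representation of `f`: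
`h * f = ∑_{a ∈ A} r a * x^a` with `h` and the `r a` outside `(x_1, …, x_p)`. -/
def IsMonRep (x : Fin p → R) (f : R) (A : Finset (Fin p → ℕ)) : Prop :=
  ∃ (h : R) (r : (Fin p → ℕ) → R),
    h ∉ Ideal.span (Set.range x) ∧ (∀ a ∈ A, r a ∉ Ideal.span (Set.range x)) ∧
    h * f = ∑ a ∈ A, r a * mono x a

/-- A minimal (irredundant) monomial representation: no monomial divides another. -/
def IsMinMonRep (x : Fin p → R) (f : R) (A : Finset (Fin p → ℕ)) : Prop :=
  IsMonRep x f A ∧ ∀ a ∈ A, ∀ b ∈ A, a ≠ b → ¬ mono x a ∣ mono x b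

open Classical in
/-- The support of `f`: the exponent set of its (unique) minimal monomial representation. -/
def supp (x : Fin p → R) (f : R) : Set (Fin p → ℕ) :=
  if h : ∃ A : Finset (Fin p → ℕ), IsMinMonRep x f A then ↑h.choose else ∅

/-- Embedding of exponent vectors into `ℝ^p`. -/
def toR (a : Fin p → ℕ) : Fin p → ℝ := fun i => (a i : ℝ)

/-- The Newton polyhedron of a set of ring elements. -/
def Γ (x : Fin p → R) (S : Set R) : Set (Fin p → ℝ) :=
  convexHull ℝ (toR '' ⋃ f ∈ S, supp x f)

/-- The Newton polyhedron `Γ_x(I)` of an ideal. -/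
def ΓI (x : Fin p → R) (I : Ideal R) : Set (Fin p → ℝ) := Γ x (I : Set R)

/-- The Newton polyhedron `Γ_x(f)` of an element: that of the principal ideal `(f)`. -/
def ΓE (x : Fin p → R) (f : R) : Set (Fin p → ℝ) := ΓI x (Ideal.span {f})

/-- The integral closure of an ideal `I`: elements satisfying an equation of integral
dependence `f^n + a_1 f^{n-1} + ⋯ + a_n = 0` with `a_i ∈ I^i`. -/
def intClosure (I : Ideal R) : Set R :=
  {f | ∃ n : ℕ, 0 < n ∧ ∃ a : ℕ → R, (∀ i ∈ Finset.Icc 1 n, a i ∈ I ^ i) ∧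
    f ^ n + ∑ i ∈ Finset.Icc 1 n, a i * f ^ (n - i) = 0}

/-- The monomial ideal `I_0` spanned by the lattice points of `Γ_x(I)`. -/
def idealZero (x : Fin p → R) (I : Ideal R) : Ideal R :=
  Ideal.span (mono x '' {a | toR a ∈ ΓI x I})

/-- The ideal `K_I` generated by the monomials lying in the integral closure of `I`. -/
def KIdeal (x : Fin p → R) (I : Ideal R) : Ideal R :=
  Ideal.span {m | (∃ a : Fin p → ℕ, m = mono x a) ∧ m ∈ intClosure I}


lemma isPrime_span (x : Fin p → R) (hx : IsGRSOP x) (S : Set (Fin p)) :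
    (Ideal.span (x '' S)).IsPrime := by
  have := (hx.2 S).1
  exact (Ideal.Quotient.isDomain_iff_prime _).1 this

lemma not_mem_span (x : Fin p → R) (hx : IsGRSOP x) (i : Fin p) (S : Set (Fin p)) (hi : i ∉ S) :
    x i ∉ Ideal.span (x '' S) := by
  intro h
  obtain ⟨q, rfl⟩ : ∃ q, p = q + 1 := ⟨p - 1, by have := i.2; omega⟩
  have h1 := (hx.1 (Equiv.swap i (Fin.last q))).2 (Fin.last q) 1
  have h3 : (1 : R) * (x ∘ (Equiv.swap i (Fin.last q))) (Fin.last q) ∈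
      Ideal.span ((x ∘ (Equiv.swap i (Fin.last q))) '' {j | j < Fin.last q}) := by
    simp only [Function.comp, Equiv.swap_apply_right, one_mul]
    refine Ideal.span_mono ?_ h
    rintro _ ⟨j, hj, rfl⟩
    have hji : j ≠ i := by rintro rfl; exact hi hj
    refine ⟨Equiv.swap i (Fin.last q) j, ?_, by simp⟩
    simp only [Set.mem_ofPred_eq]
    refine lt_of_le_of_ne (Fin.le_last _) ?_
    intro h
    apply hji
    have := congrArg (Equiv.swap i (Fin.last q)) h
    simpa using this
  have h4 := h1 h3
  apply (hx.1 (Equiv.swap i (Fin.last q))).1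
  rw [Ideal.eq_top_iff_one]
  exact Ideal.span_mono (Set.image_subset_range _ _) h4

/-- powers ideal -/
def PI (x : Fin p → R) (S : Finset (Fin p)) (n : Fin p → ℕ) : Ideal R :=
  Ideal.span ((fun j => x j ^ n j) '' (S : Set (Fin p)))

lemma PI_split (x : Fin p → R) (S : Finset (Fin p)) (n : Fin p → ℕ) (j : Fin p) (hj : j ∈ S)
    (m : ℕ) (r : R) :
    r ∈ PI x S (Function.update n j m) ↔ ∃ t, r - x j ^ m * t ∈ PI x (S.erase j) n := by
  have : PI x S (Function.update n j m) = Ideal.span {x j ^ m} ⊔ PI x (S.erase j) n := by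
    unfold PI
    conv_lhs => rw [← Finset.insert_erase hj]
    rw [Finset.coe_insert, Set.image_insert_eq, Ideal.span_insert]
    congr 2
    · simp
    · apply Set.image_congr
      intro k hk
      have : k ≠ j := by
        have := Finset.mem_coe.1 hk
        exact (Finset.mem_erase.1 this).1
      simp [this]
  rw [this]
  constructor
  · intro h
    obtain ⟨y, hy, z, hz, rfl⟩ := Submodule.mem_sup.1 h
    obtain ⟨t, rfl⟩ := Ideal.mem_span_singleton'.1 hy
    refine ⟨t, ?_⟩
    convert hz using 1
    ring
  · rintro ⟨t, ht⟩
    refine Submodule.mem_sup.2 ⟨x j ^ m * t, Ideal.mem_span_singleton.2 ⟨t, rfl⟩, _, ht, by ring⟩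

lemma pow_reg {K : Ideal R} {y : R} (h : ∀ r, r * y ∈ K → r ∈ K) (m : ℕ) (r : R)
    (hr : y ^ m * r ∈ K) : r ∈ K := by
  induction m with
  | zero => simpa using hr
  | succ m ih =>
    apply ih; apply h; convert hr using 1; ring

lemma PI_reg (x : Fin p → R) (hx : IsGRSOP x) (N : ℕ) : ∀ (S : Finset (Fin p)) (n : Fin p → ℕ),
    ∑ j ∈ S, n j = N → ∀ i ∉ S, ∀ r, r * x i ∈ PI x S n → r ∈ PI x S n := by
  induction N using Nat.strong_induction_on with
  | _ N ih =>
  intro S n hN i hi r hr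
  by_cases h0 : ∃ j ∈ S, n j = 0
  · obtain ⟨j, hj, hj0⟩ := h0
    have : PI x S n = ⊤ := by
      rw [Ideal.eq_top_iff_one]
      exact Ideal.subset_span ⟨j, hj, by simp [hj0]⟩
    rw [this]; trivial
  by_cases h1 : ∀ j ∈ S, n j = 1
  · have e : PI x S n = Ideal.span (x '' (S : Set (Fin p))) := by
      unfold PI
      congr 1
      apply Set.image_congr
      intro k hk
      simp [h1 k hk]
    rw [e] at hr ⊢
    exact ((isPrime_span x hx S).mem_or_mem hr).resolve_right (not_mem_span x hx i S (by simpa using hi))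
  push Not at h0 h1
  obtain ⟨j, hj, hj1⟩ := h1
  have hj0 := h0 j hj
  obtain ⟨m, hm⟩ : ∃ m, n j = m + 2 := ⟨n j - 2, by omega⟩
  have hn : Function.update n j (m + 2) = n := by rw [← hm]; simp
  have hsum : ∀ k, ∑ l ∈ S, Function.update n j k l = k + ∑ l ∈ S.erase j, n l := by
    intro k
    rw [← Finset.add_sum_erase _ _ hj]
    congr 1
    · simp
    · apply Finset.sum_congr rfl
      intro l hl
      simp [(Finset.mem_erase.1 hl).1]
  have hN' := hsum (m + 2)
  rw [hn, hN] at hN'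
  have regj : ∀ r, r * x j ∈ PI x (S.erase j) n → r ∈ PI x (S.erase j) n :=
    ih _ (by omega) (S.erase j) n rfl j (by simp)
  rw [← hn] at hr ⊢
  have hr' : r * x i ∈ PI x S (Function.update n j (m + 1)) := by
    rw [PI_split x S n j hj] at hr ⊢
    obtain ⟨t, ht⟩ := hr
    exact ⟨x j * t, by convert ht using 1; ring⟩
  have hr2 := ih _ (by rw [hsum]; omega) S (Function.update n j (m + 1)) rfl i hi r hr'
  rw [PI_split x S n j hj] at hr hr2
  obtain ⟨t, ht⟩ := hr
  obtain ⟨u, hu⟩ := hr2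
  have h3 : x j ^ (m + 1) * (u * x i - x j * t) ∈ PI x (S.erase j) n := by
    have := Ideal.sub_mem _ ht (Ideal.mul_mem_right (x i) _ hu)
    convert this using 1; ring
  have h4 := pow_reg regj _ _ h3
  have h5 : u * x i ∈ PI x S (Function.update n j 1) := by
    rw [PI_split x S n j hj]
    exact ⟨t, by simpa using h4⟩
  have h6 := ih _ (by rw [hsum]; omega) S (Function.update n j 1) rfl i hi u h5
  rw [PI_split x S n j hj] at h6
  obtain ⟨v, hv⟩ := h6
  rw [PI_split x S n j hj]
  refine ⟨v, ?_⟩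
  have := Ideal.add_mem _ hu (Ideal.mul_mem_left _ (x j ^ (m + 1)) hv)
  convert this using 1; ring

lemma key_aux (x : Fin p → R) (hx : IsGRSOP x) (a : Fin p → ℕ) (T : Finset (Fin p)) : ∀ r : R,
    r * ∏ i ∈ T, x i ^ a i ∈ PI x Finset.univ (fun i => if i ∈ T then a i + 1 else 1) →
    r ∈ Ideal.span (Set.range x) := by
  induction T using Finset.induction_on with
  | empty => intro r hr; simpa [PI] using hr
  | insert j T hj ih =>
    intro r hr
    apply ih
    have e1 : (fun i => if i ∈ insert j T then a i + 1 else 1) =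
      Function.update (fun i => if i ∈ T then a i + 1 else 1) j (a j + 1) := by
      funext i
      by_cases h : i = j
      · subst h; simp
      · simp [h]
    have e2 : (fun i => if i ∈ T then a i + 1 else 1) =
      Function.update (fun i => if i ∈ T then a i + 1 else 1) j 1 := by
      funext i
      by_cases h : i = j
      · subst h; simp [hj]
      · simp [h]
    rw [e1, PI_split _ _ _ _ (Finset.mem_univ j)] at hr
    rw [e2, PI_split _ _ _ _ (Finset.mem_univ j)]
    obtain ⟨t, ht⟩ := hr
    refine ⟨t, ?_⟩
    refine pow_reg (PI_reg x hx _ _ _ rfl j (by simp)) (a j) _ ?_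
    rw [Finset.prod_insert hj] at ht
    convert ht using 1; ring

/-- monomial ideal -/
def MI (x : Fin p → R) (U : Set (Fin p → ℕ)) : Ideal R := Ideal.span (mono x '' U)

lemma mono_mem (x : Fin p → R) {U : Set (Fin p → ℕ)} {a b : Fin p → ℕ} (hb : b ∈ U) (h : b ≤ a) :
    mono x a ∈ MI x U := by
  have : mono x a = mono x (a - b) * mono x b := by
    unfold mono
    rw [← Finset.prod_mul_distrib]
    apply Finset.prod_congr rfl
    intro i _
    rw [← pow_add]
    congr 1
    have : b i ≤ a i := h i
    simp only [Pi.sub_apply]; omega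
  rw [this]
  exact Ideal.mul_mem_left _ _ (Ideal.subset_span ⟨b, hb, rfl⟩)

lemma MI_le (x : Fin p → R) {U V : Set (Fin p → ℕ)} (h : ∀ u ∈ U, ∃ v ∈ V, v ≤ u) :
    MI x U ≤ MI x V := by
  unfold MI
  rw [Ideal.span_le]
  rintro _ ⟨u, hu, rfl⟩
  obtain ⟨v, hv, hvu⟩ := h u hu
  exact mono_mem x hv hvu

lemma key (x : Fin p → R) (hx : IsGRSOP x) (a : Fin p → ℕ) (r : R)
    (hr : r * mono x a ∈ MI x {b | ¬ b ≤ a}) : r ∈ Ideal.span (Set.range x) := by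
  apply key_aux x hx a Finset.univ
  have : MI x {b | ¬ b ≤ a} ≤ PI x Finset.univ (fun i => if i ∈ Finset.univ then a i + 1 else 1) := by
    unfold MI
    rw [Ideal.span_le]
    rintro _ ⟨b, hb, rfl⟩
    simp only [Set.mem_ofPred_eq, Pi.le_def, not_forall, not_le] at hb
    obtain ⟨i, hi⟩ := hb
    refine Ideal.mem_of_dvd _ (?_ : x i ^ (a i + 1) ∣ _) (Ideal.subset_span ⟨i, by simp, by simp⟩)
    exact (pow_dvd_pow _ hi).trans (Finset.dvd_prod_of_mem (fun i => x i ^ b i) (Finset.mem_univ i))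
  exact this hr

lemma mem_MI_finset (x : Fin p → R) (T : Finset (Fin p → ℕ)) (f : R) (hf : f ∈ MI x T) :
    ∃ c : (Fin p → ℕ) → R, f = ∑ a ∈ T, c a * mono x a := by
  unfold MI at hf
  obtain ⟨c, hc⟩ := (Submodule.mem_span_image_finset_iff_exists_fun' R).1 hf
  exact ⟨c, by simpa using hc.symm⟩

lemma mono_add (x : Fin p → R) (a b : Fin p → ℕ) : mono x (a + b) = mono x a * mono x b := by
  simp [mono, pow_add, Finset.prod_mul_distrib]

lemma mono_single (x : Fin p → R) (i : Fin p) : mono x (Pi.single i 1) = x i := by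
  unfold mono
  rw [Finset.prod_eq_single i] <;> simp +contextual [Pi.single_apply]

lemma P_mul_mem (x : Fin p → R) (a : Fin p → ℕ) (c : R) (hc : c ∈ Ideal.span (Set.range x))
    (U : Set (Fin p → ℕ)) (hU : ∀ i, a + Pi.single i 1 ∈ U) : c * mono x a ∈ MI x U := by
  induction hc using Submodule.span_induction with
  | mem y hy =>
    obtain ⟨i, rfl⟩ := hy
    refine Ideal.subset_span ⟨_, hU i, ?_⟩
    rw [mono_add, mono_single, mul_comm]
  | zero => simp
  | add y z _ _ h1 h2 => rw [add_mul]; exact add_mem h1 h2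
  | smul t y _ h => rw [smul_eq_mul, mul_assoc]; exact Ideal.mul_mem_left _ _ h

lemma mono_dvd (x : Fin p → R) (hx : IsGRSOP x) {a b : Fin p → ℕ} (h : mono x a ∣ mono x b) :
    a ≤ b := by
  by_contra hab
  have : (1 : R) ∈ Ideal.span (Set.range x) := by
    apply key x hx b
    rw [one_mul]
    exact Ideal.mem_of_dvd _ h (Ideal.subset_span ⟨a, hab, rfl⟩)
  exact (hx.1 (Equiv.refl _)).1 ((Ideal.eq_top_iff_one _).2 (by simpa using this))

lemma P_prime (x : Fin p → R) (hx : IsGRSOP x) : (Ideal.span (Set.range x)).IsPrime := by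
  have := isPrime_span x hx Set.univ
  rwa [Set.image_univ] at this

lemma sum_rest_mem (x : Fin p → R) (A : Finset (Fin p → ℕ)) (c : (Fin p → ℕ) → R)
    (a : Fin p → ℕ) (V : Set (Fin p → ℕ)) (h : ∀ b ∈ A, b ≠ a → b ∈ V) :
    ∑ b ∈ A.erase a, c b * mono x b ∈ MI x V := by
  apply Ideal.sum_mem
  intro b hb
  rw [Finset.mem_erase] at hb
  exact Ideal.mul_mem_left _ _ (Ideal.subset_span ⟨b, h b hb.2 hb.1, rfl⟩)

lemma rep_le (x : Fin p → R) (hx : IsGRSOP x) (f : R) (A : Finset (Fin p → ℕ))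
    (hA : IsMinMonRep x f A) (B : Set (Fin p → ℕ)) (k : R) (hk : k ∉ Ideal.span (Set.range x))
    (hB : k * f ∈ MI x B) (a : Fin p → ℕ) (ha : a ∈ A) : ∃ b ∈ B, b ≤ a := by
  by_contra hcon
  push Not at hcon
  obtain ⟨⟨h, r, hh, hr, e⟩, hmin⟩ := hA
  have hP := P_prime x hx
  have h1 : k * f ∈ MI x {b | ¬ b ≤ a} := MI_le x (fun u hu => ⟨u, hcon u hu, le_rfl⟩) hB
  have h2 : ∑ b ∈ A.erase a, r b * mono x b ∈ MI x {b | ¬ b ≤ a} := by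
    apply sum_rest_mem
    intro b hb hba hle
    exact hmin b hb a ha hba (by
      obtain ⟨c, rfl⟩ := exists_add_of_le hle
      rw [mono_add]; exact dvd_mul_right _ _)
  rw [← Finset.add_sum_erase _ _ ha] at e
  have h3 : (k * r a) * mono x a ∈ MI x {b | ¬ b ≤ a} := by
    have := Ideal.sub_mem _ (Ideal.mul_mem_left _ h h1) (Ideal.mul_mem_left _ k h2)
    convert this using 1
    linear_combination -k * e
  rcases hP.mem_or_mem (key x hx a _ h3) with h4 | h4
  · exact hk h4
  · exact hr a ha h4

lemma rep_mem (x : Fin p → R) (f : R) (A : Finset (Fin p → ℕ))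
    (hA : IsMonRep x f A) : ∃ k ∉ Ideal.span (Set.range x), k * f ∈ MI x A := by
  obtain ⟨h, r, hh, hr, e⟩ := hA
  refine ⟨h, hh, ?_⟩
  rw [e]
  exact Ideal.sum_mem _ fun b hb => Ideal.mul_mem_left _ _ (Ideal.subset_span ⟨b, hb, rfl⟩)

lemma rep_unique (x : Fin p → R) (hx : IsGRSOP x) (f : R) (A B : Finset (Fin p → ℕ))
    (hA : IsMinMonRep x f A) (hB : IsMinMonRep x f B) : A ⊆ B := by
  intro a ha
  obtain ⟨k, hk, h1⟩ := rep_mem x f B hB.1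
  obtain ⟨l, hl, h2⟩ := rep_mem x f A hA.1
  obtain ⟨b, hb, hba⟩ := rep_le x hx f A hA B k hk h1 a ha
  obtain ⟨c, hc, hcb⟩ := rep_le x hx f B hB A l hl h2 b hb
  have : c = a := by
    by_contra hne
    refine hA.2 c hc a ha hne ?_
    obtain ⟨d, rfl⟩ := exists_add_of_le (hcb.trans hba)
    rw [mono_add]; exact dvd_mul_right _ _
  subst this
  rwa [le_antisymm hcb hba]

lemma supp_eq (x : Fin p → R) (hx : IsGRSOP x) (f : R) (A : Finset (Fin p → ℕ))
    (hA : IsMinMonRep x f A) : supp x f = A := by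
  have h : ∃ A : Finset (Fin p → ℕ), IsMinMonRep x f A := ⟨A, hA⟩
  unfold supp
  rw [dif_pos h]
  congr 1
  exact Finset.Subset.antisymm (rep_unique x hx f _ _ h.choose_spec hA)
    (rep_unique x hx f _ _ hA h.choose_spec)

lemma krull (P : Ideal R) [hP : P.IsPrime] [IsNoetherianRing (Localization.AtPrime P)]
    (J : Ideal R) (f : R) (h : ∀ N : ℕ, f ∈ J ⊔ P ^ N) : ∃ k ∉ P, k * f ∈ J := by
  set L := Localization.AtPrime P
  set J' := J.map (algebraMap R L)
  have h1 : (Ideal.Quotient.mk J' (algebraMap R L f)) ∈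
      (⨅ i : ℕ, (IsLocalRing.maximalIdeal L) ^ i • (⊤ : Submodule L (L ⧸ J'))) := by
    rw [Submodule.mem_iInf]
    intro N
    obtain ⟨y, hy, z, hz, e⟩ := Submodule.mem_sup.1 (h N)
    have e2 : Ideal.Quotient.mk J' (algebraMap R L f) = Ideal.Quotient.mk J' (algebraMap R L z) := by
      rw [← e, map_add, map_add, Ideal.Quotient.eq_zero_iff_mem.2 (Ideal.mem_map_of_mem _ hy), zero_add]
    rw [e2]
    have hz' : algebraMap R L z ∈ IsLocalRing.maximalIdeal L ^ N := by
      rw [← Localization.AtPrime.map_eq_maximalIdeal, ← Ideal.map_pow]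
      exact Ideal.mem_map_of_mem _ hz
    have := Submodule.smul_mem_smul hz' (Submodule.mem_top : (1 : L ⧸ J') ∈ (⊤ : Submodule L (L ⧸ J')))
    convert this using 1
    change _ = Ideal.Quotient.mk J' (algebraMap R L z * 1)
    rw [mul_one]
  rw [Ideal.iInf_pow_smul_eq_bot_of_isLocalRing _ (IsLocalRing.maximalIdeal.isMaximal L).ne_top] at h1
  have h2 : algebraMap R L f ∈ J' := Ideal.Quotient.eq_zero_iff_mem.1 h1
  rw [IsLocalization.algebraMap_mem_map_algebraMap_iff P.primeCompl] at h2
  obtain ⟨m, hm, h3⟩ := h2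
  exact ⟨m, hm, h3⟩

lemma mono_mem_pow (x : Fin p → R) (a : Fin p → ℕ) :
    mono x a ∈ Ideal.span (Set.range x) ^ (∑ i, a i) := by
  unfold mono
  rw [← Finset.prod_pow_eq_pow_sum]
  exact Ideal.prod_mem_prod fun i _ => Ideal.pow_mem_pow (Ideal.subset_span (Set.mem_range_self i)) _

lemma exists_rep (x : Fin p → R) (hR : IsRegularDomain R) (hx : IsGRSOP x) (f : R) :
    ∃ A, IsMinMonRep x f A := by
  have hP := P_prime x hx
  set P := Ideal.span (Set.range x) with hPdef
  have hnoeth : IsNoetherianRing (Localization.AtPrime P) := (hR.2 P hP).1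
  let D : Set (Fin p → ℕ) := {a | ∀ h ∉ P, h * f ∉ MI x {b | ¬ b ≤ a}}
  let B : Set (Fin p → ℕ) := {a | Minimal (· ∈ D) a}
  have hBanti : IsAntichain (· ≤ ·) B := setOfPred_minimal_antichain _
  have hBfin : B.Finite := by
    exact WellQuasiOrderedLE.finite_of_isAntichain hBanti
  have hDB : ∀ d ∈ D, ∃ b ∈ B, b ≤ d := by
    intro d hd
    obtain ⟨b, hb, hb'⟩ := exists_minimal_le_of_wellFoundedLT (· ∈ D) d hd
    exact ⟨b, hb', hb⟩
  have step : ∀ N : ℕ, f ∈ MI x B ⊔ MI x {a | N ≤ ∑ i, a i} := by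
    intro N
    induction N with
    | zero =>
      apply Submodule.mem_sup_right
      have : (1 : R) ∈ MI x {a | 0 ≤ ∑ i, a i} := Ideal.subset_span ⟨0, by simp, by simp [mono]⟩
      rw [(Ideal.eq_top_iff_one _).2 this]; trivial
    | succ N ih =>
      obtain ⟨y, hy, z, hz, e⟩ := Submodule.mem_sup.1 ih
      have hfin : {a : Fin p → ℕ | ∑ i, a i = N}.Finite := by
        apply (Set.finite_Iic (fun _ : Fin p => N)).subset
        intro a ha i
        rw [← (show ∑ i, a i = N from ha)]
        exact Finset.single_le_sum (f := a) (fun _ _ => Nat.zero_le _) (Finset.mem_univ i)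
      have hsplit : MI x {a | N ≤ ∑ i, a i} ≤
          MI x hfin.toFinset ⊔ MI x {a | N + 1 ≤ ∑ i, a i} := by
        unfold MI
        rw [← Ideal.span_union, ← Set.image_union]
        apply Ideal.span_mono
        apply Set.image_mono
        intro a ha
        simp only [Set.mem_ofPred_eq, Set.mem_union, Finset.mem_coe, Set.Finite.mem_toFinset] at ha ⊢
        omega
      obtain ⟨u, hu, v, hv, e2⟩ := Submodule.mem_sup.1 (hsplit hz)
      obtain ⟨c, hc⟩ := mem_MI_finset x _ u hu
      rw [← e, ← e2]
      refine add_mem (Submodule.mem_sup_left hy) (add_mem ?_ (Submodule.mem_sup_right hv))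
      rw [hc]
      apply Ideal.sum_mem
      intro a ha
      have haN : ∑ i, a i = N := by simpa using ha
      by_cases hca : c a ∈ P
      · apply Submodule.mem_sup_right
        apply P_mul_mem x a _ hca
        intro i
        simp [Finset.sum_add_distrib, haN]
      by_cases haB : ∃ b ∈ B, b ≤ a
      · obtain ⟨b, hb, hba⟩ := haB
        exact Submodule.mem_sup_left (Ideal.mul_mem_left _ _ (mono_mem x hb hba))
      exfalso
      have haD : a ∉ D := fun h => haB (hDB a h)
      simp only [D, Set.mem_ofPred_eq, not_forall, not_not] at haD
      obtain ⟨h, hh, hhf⟩ := haD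
      push Not at haB
      have hlt : ∀ b : Fin p → ℕ, b ≤ a → ∑ i, b i ≤ N := fun b hb => by
        rw [← haN]; exact Finset.sum_le_sum fun i _ => hb i
      have m1 : y ∈ MI x {b | ¬ b ≤ a} := MI_le x (fun u hu => ⟨u, haB u hu, le_rfl⟩) hy
      have m2 : v ∈ MI x {b | ¬ b ≤ a} := by
        refine MI_le x (fun u hu => ⟨u, fun hle => ?_, le_rfl⟩) hv
        have := hlt u hle
        simp only [Set.mem_ofPred_eq] at hu
        omega
      have m3 : ∑ b ∈ hfin.toFinset.erase a, c b * mono x b ∈ MI x {b | ¬ b ≤ a} := by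
        apply sum_rest_mem
        intro b hb hba hle
        have hbN : ∑ i, b i = N := by simpa using hb
        apply hba
        funext i
        exact (Finset.sum_eq_sum_iff_of_le (fun i _ => hle i)).1 (hbN.trans haN.symm) i (Finset.mem_univ i)
      rw [← Finset.add_sum_erase _ _ ha] at hc
      have m4 : (h * c a) * mono x a ∈ MI x {b | ¬ b ≤ a} := by
        have := Ideal.sub_mem _ hhf (Ideal.mul_mem_left _ h (add_mem (add_mem m1 m2) m3))
        convert this using 1
        linear_combination h * (e + e2 - hc)
      rcases hP.mem_or_mem (key x hx a _ m4) with h4 | h4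
      · exact hh h4
      · exact hca h4
  obtain ⟨h, hh, hf⟩ := krull P (MI x B) f (fun N => by
    refine (sup_le_sup_left (?_ : MI x {a | N ≤ ∑ i, a i} ≤ P ^ N) (MI x B) :
      MI x B ⊔ MI x {a | N ≤ ∑ i, a i} ≤ MI x B ⊔ P ^ N) (step N)
    unfold MI
    rw [Ideal.span_le]
    rintro _ ⟨a, ha, rfl⟩
    exact Ideal.pow_le_pow_right ha (mono_mem_pow x a))
  have hf' : h * f ∈ MI x hBfin.toFinset := by simpa using hf
  obtain ⟨c, hc⟩ := mem_MI_finset x _ _ hf'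
  refine ⟨hBfin.toFinset, ⟨h, c, hh, ?_, hc⟩, ?_⟩
  · intro b hb hcb
    have hbB : b ∈ B := by simpa using hb
    refine hbB.1 h hh ?_
    rw [hc, ← Finset.add_sum_erase _ _ hb]
    refine add_mem ?_ ?_
    · apply P_mul_mem x b _ hcb
      intro i hle
      have := hle i
      simp at this
    · apply sum_rest_mem
      intro b' hb' hne hle
      exact hBanti (by simpa using hb') hbB hne hle
  · intro a ha b hb hne hdvd
    exact hBanti (by simpa using ha) (by simpa using hb) hne (mono_dvd x hx hdvd)

lemma rep_shift (x : Fin p → R) (hx : IsGRSOP x) (f : R) (A : Finset (Fin p → ℕ))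
    (hA : IsMinMonRep x f A) (c : Fin p → ℕ) :
    IsMinMonRep x (mono x c * f) (A.image (· + c)) := by
  obtain ⟨⟨h, r, hh, hr, e⟩, hmin⟩ := hA
  refine ⟨⟨h, fun a => r (a - c), hh, ?_, ?_⟩, ?_⟩
  · intro a ha
    obtain ⟨b, hb, rfl⟩ := Finset.mem_image.1 ha
    simpa using hr b hb
  · rw [Finset.sum_image (fun a _ b _ h => add_right_cancel h)]
    simp only [add_tsub_cancel_right, mono_add]
    rw [mul_left_comm, e, Finset.mul_sum]
    exact Finset.sum_congr rfl fun _ _ => by ring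
  · intro a ha b hb hne hdvd
    obtain ⟨a, ha', rfl⟩ := Finset.mem_image.1 ha
    obtain ⟨b, hb', rfl⟩ := Finset.mem_image.1 hb
    have hle : a ≤ b := by simpa using mono_dvd x hx hdvd
    refine hmin a ha' b hb' (by rintro rfl; exact hne rfl) ?_
    obtain ⟨d, rfl⟩ := exists_add_of_le hle
    rw [mono_add]; exact dvd_mul_right _ _

/-- the Newton polyhedron is computed from any generating set. -/
theorem newtonPolyhedron_eq_convexHull_of_generators {R : Type*} [CommRing R] {p : ℕ}
    (x : Fin p → R) (hR : IsRegularDomain R) (hx : IsGRSOP x) (I : Ideal R)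
    (s : ℕ) (g : Fin s → R) (hgen : Ideal.span (Set.range g) = I) :
    ΓI x I = convexHull ℝ (⋃ i : Fin s, ΓE x (g i)) := by
  have hP := P_prime x hx
  apply Set.Subset.antisymm
  · unfold ΓI Γ
    apply convexHull_mono
    rintro _ ⟨a, ha, rfl⟩
    simp only [Set.mem_iUnion] at ha
    obtain ⟨f, hf, ha⟩ := ha
    obtain ⟨A, hA⟩ := exists_rep x hR hx f
    rw [supp_eq x hx f A hA] at ha
    choose B hB using fun i => exists_rep x hR hx (g i)
    choose k hk hkB using fun i => rep_mem x (g i) (B i) (hB i).1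
    have hK : ∏ i, k i ∉ Ideal.span (Set.range x) := by
      intro h
      obtain ⟨i, _, hi⟩ := (hP.prod_mem_iff).1 h
      exact hk i hi
    have hmem : (∏ i, k i) * f ∈ MI x (⋃ i, (B i : Set (Fin p → ℕ))) := by
      have hf' : f ∈ Ideal.span (Set.range g) := by rw [hgen]; exact hf
      clear hf hA ha
      induction hf' using Submodule.span_induction with
      | mem y hy =>
        obtain ⟨i, rfl⟩ := hy
        rw [← Finset.prod_erase_mul _ _ (Finset.mem_univ i), mul_assoc]
        apply Ideal.mul_mem_left
        refine MI_le x (fun u hu => ⟨u, Set.mem_iUnion.2 ⟨i, hu⟩, le_rfl⟩) (hkB i)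
      | zero => simp
      | add y z _ _ h1 h2 => rw [mul_add]; exact add_mem h1 h2
      | smul t y _ h => rw [smul_eq_mul, mul_left_comm]; exact Ideal.mul_mem_left _ _ h
    obtain ⟨b, hb, hba⟩ := rep_le x hx f A hA _ _ hK hmem a ha
    obtain ⟨i, hb⟩ := Set.mem_iUnion.1 hb
    obtain ⟨c, rfl⟩ := exists_add_of_le hba
    refine Set.mem_iUnion.2 ⟨i, ?_⟩
    unfold ΓE ΓI Γ
    apply subset_convexHull
    refine ⟨b + c, ?_, rfl⟩
    simp only [Set.mem_iUnion]
    refine ⟨mono x c * g i, Ideal.mul_mem_left _ _ (Ideal.subset_span rfl), ?_⟩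
    rw [supp_eq x hx _ _ (rep_shift x hx (g i) (B i) (hB i) c)]
    exact Finset.mem_coe.2 (Finset.mem_image.2 ⟨b, hb, rfl⟩)
  · apply convexHull_min _ (convex_convexHull ℝ _)
    apply Set.iUnion_subset
    intro i
    unfold ΓE ΓI Γ
    apply convexHull_mono
    apply Set.image_mono
    apply Set.biUnion_subset_biUnion_left
    intro y hy
    have : Ideal.span {g i} ≤ I := by
      rw [← hgen]
      exact Ideal.span_mono (by rintro _ rfl; exact ⟨i, rfl⟩)
    exact this hy

end NND
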